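/- Let 1 < p < ∞, let ω be a radial weight on the unit disc with ∫₀¹ω = 1, define ω̂(r) = ∫_r¹ ω(s)ds, and define r_n by ω̂(r_n) = 2^{−n} and M_n = ⌊1/(1−r_n)⌋. Then Σ_{j=0}^∞ 2^{−j} / ( (ω_{2M_j+1})^{p'} M_{j+1} ) = ∞ if and only if ∫₀¹ ω̂(t)^{1−p'} dt = ∞, where ω_{m} = ∫₀¹ r^m ω(r) dr and p' = p/(p−1), provided ω is doubling (ω̂(r) ≤ C ω̂((1+r)/2)). -/

import Mathlib

open MeasureTheory Real

/-! Both sides are compared with `∑ γ ^ j (1 - r_{j+1})`, where `γ = 2 ^ (p' - 1)`.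

For the integral, `g = ω̂ ^ (1 - p')` is increasing with `g (r_n) = γ ^ n`. A geometric sum is
comparable to its last term, so up to an additive constant `g t` is comparable to the sum of
`γ ^ j` over the `j` with `r_{j+1} < t`; integrating in `t` gives the claim.

For the series, `M_{j+1}` is comparable to `1 / (1 - r_{j+1})`, and `ω_{2 M_j + 1}` to
`ω̂ (r_j) = 2 ^ (-j)`. With `r = r_j` and `m = 2 M_j + 1`, the moment is bounded below by the mass
of `[(1 + r) / 2, 1)`, where `s ^ m` is bounded below and which carries a fixed share of `ω̂ r`
by doubling. It is bounded above by cutting `[0, r]` into dyadic annuli: at distance `2 ^ k (1 - r)`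
from the boundary the tail has grown at most by `C ^ k`, while `s ^ m ≤ exp (-2 ^ k)`. -/

lemma ennreal_eq_top_of_le_mul {c x y : ENNReal} (hc : c ≠ ⊤) (hxy : x ≤ c * y) (hx : x = ⊤) :
    y = ⊤ := by
  contrapose! hx
  exact ne_top_of_le_ne_top (ENNReal.mul_ne_top hc hx) hxy

lemma tsum_ofReal_eq_top_of_le_mul {ι : Type*} {f g : ι → ℝ} {c : ℝ} (hc : 0 ≤ c)
    (hfg : ∀ i, f i ≤ c * g i) (hf : ∑' i, ENNReal.ofReal (f i) = ⊤) :
    ∑' i, ENNReal.ofReal (g i) = ⊤ := by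
  refine ennreal_eq_top_of_le_mul (ENNReal.ofReal_ne_top (r := c)) ?_ hf
  rw [← ENNReal.tsum_mul_left]
  refine ENNReal.tsum_le_tsum fun i => ?_
  rw [← ENNReal.ofReal_mul hc]
  exact ENNReal.ofReal_le_ofReal (hfg i)

section LevelSums

variable {γ y : ℝ} {P : ℕ → Prop} [DecidablePred P]

lemma tsum_ite_geometric_le (hγ : 1 < γ) (hP : ∀ j, P j → γ ^ (j + 1) ≤ y) :
    ∑' j, (if P j then ENNReal.ofReal (γ ^ j) else 0) ≤
      ENNReal.ofReal (γ - 1)⁻¹ * ENNReal.ofReal y := by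
  have hγ' : 0 < γ - 1 := sub_pos.2 hγ
  refine ENNReal.summable.tsum_le_of_sum_le fun s => ?_
  rw [← Finset.sum_filter]
  rcases (s.filter P).eq_empty_or_nonempty with hs | hs
  · simp only [hs, Finset.sum_empty, zero_le]
  set n := (s.filter P).max' hs
  have hPn : P n := (Finset.mem_filter.1 (Finset.max'_mem _ hs)).2
  have hsub : s.filter P ⊆ Finset.range (n + 1) := fun j hj =>
    Finset.mem_range_succ_iff.2 (Finset.le_max' _ j hj)
  calc ∑ j ∈ s.filter P, ENNReal.ofReal (γ ^ j)
      ≤ ∑ j ∈ Finset.range (n + 1), ENNReal.ofReal (γ ^ j) := Finset.sum_le_sum_of_subset hsub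
    _ = ENNReal.ofReal ((γ ^ (n + 1) - 1) / (γ - 1)) := by
        rw [← geom_sum_eq hγ.ne', ENNReal.ofReal_sum_of_nonneg fun j _ => by positivity]
    _ ≤ ENNReal.ofReal ((γ - 1)⁻¹ * y) := by
        rw [div_eq_inv_mul]
        gcongr
        linarith [hP n hPn]
    _ = _ := ENNReal.ofReal_mul (inv_nonneg.2 hγ'.le)

lemma ofReal_le_mul_one_add_tsum_ite_geometric (hγ : 1 < γ) (hP : ∀ j, γ ^ (j + 1) < y → P j) :
    ENNReal.ofReal y ≤
      ENNReal.ofReal (γ ^ 3) * (1 + ∑' j, if P j then ENNReal.ofReal (γ ^ j) else 0) := by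
  rcases le_total y (γ ^ 2) with hy | hy
  · calc ENNReal.ofReal y ≤ ENNReal.ofReal (γ ^ 3) * 1 := by
          rw [mul_one]
          exact ENNReal.ofReal_le_ofReal (hy.trans (pow_le_pow_right₀ hγ.le (by norm_num)))
      _ ≤ _ := by gcongr; exact le_self_add
  obtain ⟨k, hk, hk'⟩ := exists_nat_pow_near ((one_le_div (by positivity)).2 hy) hγ
  rw [le_div_iff₀ (by positivity), ← pow_add] at hk
  rw [div_lt_iff₀ (by positivity), ← pow_add] at hk'
  have hPk : P k := hP k ((pow_lt_pow_right₀ hγ (by lia)).trans_le hk)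
  calc ENNReal.ofReal y ≤ ENNReal.ofReal (γ ^ 3 * γ ^ k) := by
        rw [← pow_add, show 3 + k = k + 1 + 2 by ring]
        exact ENNReal.ofReal_le_ofReal hk'.le
    _ = ENNReal.ofReal (γ ^ 3) * ENNReal.ofReal (γ ^ k) := ENNReal.ofReal_mul (by positivity)
    _ ≤ _ := by
        gcongr
        refine le_trans ?_ le_add_self
        simpa only [if_pos hPk] using
          ENNReal.le_tsum (f := fun j => if P j then ENNReal.ofReal (γ ^ j) else 0) k

end LevelSums

lemma lintegral_tsum_ite_lt {a b γ : ℝ} (hγ : 0 ≤ γ) {r : ℕ → ℝ} (hr : ∀ n, a ≤ r n) :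
    ∫⁻ t in Set.Ioo a b, ∑' j, (if r (j + 1) < t then ENNReal.ofReal (γ ^ j) else 0) =
      ∑' j, ENNReal.ofReal (γ ^ j * (b - r (j + 1))) := by
  have hmeas : ∀ c : ℝ, MeasurableSet {t : ℝ | c < t} := fun c => measurableSet_Ioi
  rw [lintegral_tsum fun j =>
    (Measurable.ite (hmeas _) measurable_const measurable_const).aemeasurable]
  refine tsum_congr fun j => ?_
  have hinter : Set.Ioi (r (j + 1)) ∩ Set.Ioo a b = Set.Ioo (r (j + 1)) b := by
    rw [Set.Ioi_inter_Ioo, sup_eq_left.2 (hr _)]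
  calc ∫⁻ t in Set.Ioo a b, (if r (j + 1) < t then ENNReal.ofReal (γ ^ j) else 0)
      = ∫⁻ t in Set.Ioo a b,
          (Set.Ioi (r (j + 1))).indicator (fun _ => ENNReal.ofReal (γ ^ j)) t := by
        simp only [Set.indicator_apply, Set.mem_Ioi]
    _ = ENNReal.ofReal (γ ^ j) * volume (Set.Ioi (r (j + 1)) ∩ Set.Ioo a b) := by
        rw [lintegral_indicator_const measurableSet_Ioi, Measure.restrict_apply measurableSet_Ioi]
    _ = _ := by rw [hinter, volume_Ioo, ENNReal.ofReal_mul (by positivity)]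

theorem tsum_geometric_mul_sub_eq_top_iff {g : ℝ → ℝ} {a b γ : ℝ} (hγ : 1 < γ)
    (hg : MonotoneOn g (Set.Ico a b)) {r : ℕ → ℝ} (hr : ∀ n, r n ∈ Set.Ico a b)
    (hgr : ∀ n, g (r n) = γ ^ n) :
    ∑' j, ENNReal.ofReal (γ ^ j * (b - r (j + 1))) = ⊤ ↔
      ∫⁻ t in Set.Ioo a b, ENNReal.ofReal (g t) = ⊤ := by
  set S : ℝ → ENNReal := fun t => ∑' j, if r (j + 1) < t then ENNReal.ofReal (γ ^ j) else 0
  have hSint := lintegral_tsum_ite_lt (b := b) (zero_le_one.trans hγ.le) fun n => (hr n).1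
  have hS_le : ∀ t ∈ Set.Ioo a b, S t ≤ ENNReal.ofReal (γ - 1)⁻¹ * ENNReal.ofReal (g t) :=
    fun t ht => tsum_ite_geometric_le hγ fun j hj =>
      hgr (j + 1) ▸ hg (hr _) (Set.Ioo_subset_Ico_self ht) hj.le
  have hle_S : ∀ t ∈ Set.Ioo a b,
      ENNReal.ofReal (g t) ≤ ENNReal.ofReal (γ ^ 3) * (1 + S t) :=
    fun t ht => ofReal_le_mul_one_add_tsum_ite_geometric hγ fun j hj =>
      hg.reflect_lt (hr _) (Set.Ioo_subset_Ico_self ht) (hgr (j + 1) ▸ hj)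
  rw [← hSint]
  constructor <;> intro h
  · refine ennreal_eq_top_of_le_mul (ENNReal.ofReal_ne_top (r := (γ - 1)⁻¹)) ?_ h
    rw [← lintegral_const_mul' _ _ ENNReal.ofReal_ne_top]
    exact setLIntegral_mono' measurableSet_Ioo hS_le
  · have htop : ∫⁻ t in Set.Ioo a b, (1 + S t) = ⊤ := by
      refine ennreal_eq_top_of_le_mul (ENNReal.ofReal_ne_top (r := γ ^ 3)) ?_ h
      rw [← lintegral_const_mul' _ _ ENNReal.ofReal_ne_top]
      exact setLIntegral_mono' measurableSet_Ioo hle_S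
    have hvol : ∫⁻ _ in Set.Ioo a b, (1 : ENNReal) ≠ ⊤ := by
      simp only [lintegral_one, Measure.restrict_apply_univ, volume_Ioo, ne_eq,
        ENNReal.ofReal_ne_top, not_false_eq_true]
    rw [lintegral_add_left measurable_const] at htop
    exact (ENNReal.add_eq_top.1 htop).resolve_left hvol

section FloorInv

variable {x : ℝ}

lemma natFloor_one_div_mul_le_one (hx : 0 < x) : (⌊1 / x⌋₊ : ℝ) * x ≤ 1 :=
  (le_div_iff₀ hx).1 (Nat.floor_le (by positivity))

lemma one_le_two_mul_natFloor_one_div_mul (hx : 0 < x) (hx1 : x ≤ 1) :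
    1 ≤ 2 * ((⌊1 / x⌋₊ : ℝ) * x) := by
  have hlt : 1 / x / 2 < ⌊1 / x⌋₊ := Nat.div_two_lt_floor ((one_le_div hx).2 hx1)
  rw [div_div, div_lt_iff₀ (by positivity)] at hlt
  linarith

end FloorInv

section RpowComparison

variable {T I q A c M x : ℝ}

lemma rpow_eq_rpow_one_sub_mul (hT : 0 < T) (q : ℝ) : T = T ^ (1 - q) * T ^ q := by
  rw [← rpow_add hT, sub_add_cancel, rpow_one]

lemma div_rpow_mul_le_of_le_mul (hT : 0 < T) (hI : 0 < I) (hq : 0 ≤ q) (hA : 0 ≤ A) (hM : 0 < M)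
    (hTI : T ≤ A * I) (hMx : 1 ≤ c * (M * x)) :
    T / (I ^ q * M) ≤ A ^ q * c * (T ^ (1 - q) * x) := by
  have hTI' : T ^ q ≤ A ^ q * I ^ q := by
    rw [← mul_rpow hA hI.le]
    exact rpow_le_rpow hT.le hTI hq
  rw [div_le_iff₀ (by positivity)]
  calc T = T ^ (1 - q) * T ^ q * 1 := by rw [mul_one, ← rpow_eq_rpow_one_sub_mul hT]
    _ ≤ T ^ (1 - q) * (A ^ q * I ^ q) * (c * (M * x)) := by gcongr
    _ = A ^ q * c * (T ^ (1 - q) * x) * (I ^ q * M) := by ring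

lemma rpow_one_sub_mul_le_of_le_mul (hT : 0 < T) (hI : 0 < I) (hq : 0 ≤ q) (hA : 0 ≤ A) (hM : 0 < M)
    (hIT : I ≤ A * T) (hMx : M * x ≤ 1) :
    T ^ (1 - q) * x ≤ A ^ q * (T / (I ^ q * M)) := by
  have hIT' : I ^ q ≤ A ^ q * T ^ q := by
    rw [← mul_rpow hA hT.le]
    exact rpow_le_rpow hI.le hIT hq
  rw [← mul_div_assoc, le_div_iff₀ (by positivity)]
  calc T ^ (1 - q) * x * (I ^ q * M) = T ^ (1 - q) * I ^ q * (M * x) := by ring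
    _ ≤ T ^ (1 - q) * I ^ q * 1 := by gcongr
    _ ≤ T ^ (1 - q) * (A ^ q * T ^ q) * 1 := by gcongr
    _ = A ^ q * (T ^ (1 - q) * T ^ q) := by ring
    _ = A ^ q * T := by rw [← rpow_eq_rpow_one_sub_mul hT]

lemma two_rpow_neg_rpow_one_sub (j : ℕ) (q : ℝ) :
    ((2 : ℝ) ^ (-(j : ℝ))) ^ (1 - q) = ((2 : ℝ) ^ (q - 1)) ^ j := by
  rw [← rpow_natCast, ← rpow_mul zero_le_two, ← rpow_mul zero_le_two]
  ring_nf

end RpowComparison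

lemma exp_neg_le_one_sub_half {x : ℝ} (h0 : 0 ≤ x) (h1 : x ≤ 1) : exp (-x) ≤ 1 - x / 2 := by
  rw [exp_neg, inv_le_iff_one_le_mul₀ (exp_pos x)]
  nlinarith [add_one_le_exp x]

lemma summable_pow_mul_exp_neg_two_pow (C : ℝ) :
    Summable fun k : ℕ => C ^ (k + 1) * exp (-2 ^ k) := by
  have hlim : Filter.Tendsto (fun k : ℕ => ‖C * exp (-2 ^ k)‖) Filter.atTop (nhds 0) := by
    simpa only [Function.comp_apply, mul_zero, norm_zero] using
      ((tendsto_exp_neg_atTop_nhds_zero.comp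
        (tendsto_pow_atTop_atTop_of_one_lt one_lt_two)).const_mul C).norm
  refine summable_of_ratio_norm_eventually_le one_half_lt_one ?_
  filter_upwards [hlim.eventually_le_const one_half_pos] with k hk
  have hsucc : C ^ (k + 1 + 1) * exp (-2 ^ (k + 1)) =
      C * exp (-2 ^ k) * (C ^ (k + 1) * exp (-2 ^ k)) := by
    rw [show -(2 : ℝ) ^ (k + 1) = -2 ^ k + -2 ^ k by ring, exp_add]
    ring
  rw [hsucc, norm_mul]
  gcongr

/-- The tail integral `ω̂(r) = ∫_r^1 ω` of a radial weight, whose profile on `[0, 1)` is the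
function `ω`. -/
noncomputable def weightTail (ω : ℝ → ℝ) (r : ℝ) : ℝ := ∫ s in r..1, ω s

/-- The moment `ω_m = ∫_0^1 s^m ω(s) ds` of a radial weight. -/
noncomputable def weightMoment (ω : ℝ → ℝ) (m : ℕ) : ℝ := ∫ s in (0 : ℝ)..1, s ^ m * ω s

/-- Radial weights on the unit disc, encoded by their profile on `[0, 1)`; the values of `ω`
outside `[0, 1)` are irrelevant. -/
structure IsRadialWeight (ω : ℝ → ℝ) : Prop where
  nonneg : ∀ r ∈ Set.Ico (0 : ℝ) 1, 0 ≤ ω r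
  intervalIntegrable : IntervalIntegrable ω volume 0 1

namespace IsRadialWeight

variable {ω : ℝ → ℝ} {a b : ℝ}

lemma intervalIntegrable_sub (hω : IsRadialWeight ω) (ha : a ∈ Set.Icc (0 : ℝ) 1)
    (hb : b ∈ Set.Icc (0 : ℝ) 1) : IntervalIntegrable ω volume a b := by
  refine hω.intervalIntegrable.mono_set ?_
  rw [Set.uIcc_of_le zero_le_one]
  exact Set.uIcc_subset_Icc ha hb

lemma intervalIntegrable_pow_mul (hω : IsRadialWeight ω) (ha : a ∈ Set.Icc (0 : ℝ) 1)
    (hb : b ∈ Set.Icc (0 : ℝ) 1) (m : ℕ) : IntervalIntegrable (fun s => s ^ m * ω s) volume a b :=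
  (hω.intervalIntegrable_sub ha hb).continuousOn_mul (by fun_prop)

lemma pow_mul_integral_le (hω : IsRadialWeight ω) (ha : 0 ≤ a) (hab : a ≤ b) (hb : b ≤ 1) (m : ℕ) :
    a ^ m * ∫ s in a..b, ω s ≤ ∫ s in a..b, s ^ m * ω s := by
  have ha' : a ∈ Set.Icc (0 : ℝ) 1 := ⟨ha, hab.trans hb⟩
  have hb' : b ∈ Set.Icc (0 : ℝ) 1 := ⟨ha.trans hab, hb⟩
  rw [← intervalIntegral.integral_const_mul]
  refine intervalIntegral.integral_mono_on_of_le_Ioo hab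
    ((hω.intervalIntegrable_sub ha' hb').const_mul _) (hω.intervalIntegrable_pow_mul ha' hb' m)
    fun s hs => ?_
  have := hω.nonneg s ⟨ha.trans hs.1.le, hs.2.trans_le hb⟩
  have := hs.1.le
  gcongr

lemma integral_pow_mul_le (hω : IsRadialWeight ω) (ha : 0 ≤ a) (hab : a ≤ b) (hb : b ≤ 1) (m : ℕ) :
    ∫ s in a..b, s ^ m * ω s ≤ b ^ m * ∫ s in a..b, ω s := by
  have ha' : a ∈ Set.Icc (0 : ℝ) 1 := ⟨ha, hab.trans hb⟩
  have hb' : b ∈ Set.Icc (0 : ℝ) 1 := ⟨ha.trans hab, hb⟩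
  rw [← intervalIntegral.integral_const_mul]
  refine intervalIntegral.integral_mono_on_of_le_Ioo hab
    (hω.intervalIntegrable_pow_mul ha' hb' m) ((hω.intervalIntegrable_sub ha' hb').const_mul _)
    fun s hs => ?_
  have hs0 : 0 ≤ s := ha.trans hs.1.le
  have := hω.nonneg s ⟨hs0, hs.2.trans_le hb⟩
  have := hs.2.le
  gcongr

lemma integral_pow_mul_nonneg (hω : IsRadialWeight ω) (ha : 0 ≤ a) (hab : a ≤ b) (hb : b ≤ 1)
    (m : ℕ) : 0 ≤ ∫ s in a..b, s ^ m * ω s := by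
  rw [intervalIntegral.integral_of_le hab, integral_Ioc_eq_integral_Ioo]
  refine setIntegral_nonneg measurableSet_Ioo fun s hs => ?_
  have hs0 : 0 ≤ s := ha.trans hs.1.le
  exact mul_nonneg (pow_nonneg hs0 m) (hω.nonneg s ⟨hs0, hs.2.trans_le hb⟩)

lemma weightTail_nonneg (hω : IsRadialWeight ω) (ha : a ∈ Set.Icc (0 : ℝ) 1) :
    0 ≤ weightTail ω a := by
  simpa only [pow_zero, one_mul, weightTail] using hω.integral_pow_mul_nonneg ha.1 ha.2 le_rfl 0

lemma integral_add_weightTail (hω : IsRadialWeight ω) (ha : a ∈ Set.Icc (0 : ℝ) 1)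
    (hb : b ∈ Set.Icc (0 : ℝ) 1) : (∫ s in a..b, ω s) + weightTail ω b = weightTail ω a :=
  intervalIntegral.integral_add_adjacent_intervals (hω.intervalIntegrable_sub ha hb)
    (hω.intervalIntegrable_sub hb ⟨zero_le_one, le_rfl⟩)

lemma antitoneOn_weightTail (hω : IsRadialWeight ω) :
    AntitoneOn (weightTail ω) (Set.Icc 0 1) := fun a ha b hb hab => by
  have hnonneg := hω.integral_pow_mul_nonneg ha.1 hab hb.2 0
  simp only [pow_zero, one_mul] at hnonneg
  linarith [hω.integral_add_weightTail ha hb]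

lemma pow_mul_weightTail_le_weightMoment (hω : IsRadialWeight ω) (ha : a ∈ Set.Icc (0 : ℝ) 1)
    (m : ℕ) : a ^ m * weightTail ω a ≤ weightMoment ω m := by
  have hzero : (0 : ℝ) ∈ Set.Icc (0 : ℝ) 1 := ⟨le_rfl, zero_le_one⟩
  have hone : (1 : ℝ) ∈ Set.Icc (0 : ℝ) 1 := ⟨zero_le_one, le_rfl⟩
  calc a ^ m * weightTail ω a
      ≤ ∫ s in a..1, s ^ m * ω s := hω.pow_mul_integral_le ha.1 ha.2 le_rfl m
    _ ≤ (∫ s in 0..a, s ^ m * ω s) + ∫ s in a..1, s ^ m * ω s :=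
        le_add_of_nonneg_left (hω.integral_pow_mul_nonneg le_rfl ha.1 ha.2 m)
    _ = weightMoment ω m := intervalIntegral.integral_add_adjacent_intervals
        (hω.intervalIntegrable_pow_mul hzero ha m) (hω.intervalIntegrable_pow_mul ha hone m)

lemma integral_pow_mul_le_weightTail_add_sum (hω : IsRadialWeight ω) {ρ : ℕ → ℝ}
    (hρ : Antitone ρ) (hmem : ∀ k, ρ k ∈ Set.Icc (0 : ℝ) 1) (m K : ℕ) :
    ∫ s in ρ K..1, s ^ m * ω s ≤
      weightTail ω (ρ 0) + ∑ k ∈ Finset.range K, ρ k ^ m * weightTail ω (ρ (k + 1)) := by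
  have hone : (1 : ℝ) ∈ Set.Icc (0 : ℝ) 1 := ⟨zero_le_one, le_rfl⟩
  induction K with
  | zero =>
    simpa only [Finset.range_zero, Finset.sum_empty, add_zero, one_pow, one_mul, weightTail] using
      hω.integral_pow_mul_le (hmem 0).1 (hmem 0).2 le_rfl m
  | succ K ih =>
    have hstep : ∫ s in ρ (K + 1)..ρ K, s ^ m * ω s ≤ ρ K ^ m * weightTail ω (ρ (K + 1)) :=
      calc ∫ s in ρ (K + 1)..ρ K, s ^ m * ω s
          ≤ ρ K ^ m * ∫ s in ρ (K + 1)..ρ K, ω s :=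
            hω.integral_pow_mul_le (hmem _).1 (hρ K.le_succ) (hmem K).2 m
        _ ≤ ρ K ^ m * weightTail ω (ρ (K + 1)) := by
            gcongr
            · exact pow_nonneg (hmem K).1 m
            · linarith [hω.integral_add_weightTail (hmem (K + 1)) (hmem K),
                hω.weightTail_nonneg (hmem K)]
    rw [Finset.sum_range_succ, ← intervalIntegral.integral_add_adjacent_intervals
      (hω.intervalIntegrable_pow_mul (hmem _) (hmem K) m)
      (hω.intervalIntegrable_pow_mul (hmem K) hone m)]
    linarith

end IsRadialWeight

/-- The radius `1 - 2 ^ k * (1 - r)`, at `2 ^ k` times the distance of `r` from the unit circle,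
truncated at `0`. It decomposes `[0, r]` into dyadic annuli. -/
noncomputable def dyadicRadius (r : ℝ) (k : ℕ) : ℝ := max 0 (1 - 2 ^ k * (1 - r))

section DyadicRadius

variable {r : ℝ}

lemma dyadicRadius_mem_Ico (hr : r < 1) (k : ℕ) : dyadicRadius r k ∈ Set.Ico (0 : ℝ) 1 :=
  ⟨le_max_left _ _, max_lt one_pos (sub_lt_self _ (mul_pos (by positivity) (sub_pos.2 hr)))⟩

lemma dyadicRadius_zero (hr : 0 ≤ r) : dyadicRadius r 0 = r := by
  rw [dyadicRadius, pow_zero, one_mul, sub_sub_cancel, max_eq_right hr]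

lemma antitone_dyadicRadius (hr : r ≤ 1) : Antitone (dyadicRadius r) := fun k l hkl => by
  have := sub_nonneg.2 hr
  unfold dyadicRadius
  gcongr
  exact one_le_two

lemma dyadicRadius_le_midpoint (hr : r < 1) (k : ℕ) :
    dyadicRadius r k ≤ (1 + dyadicRadius r (k + 1)) / 2 := by
  have hsucc : 1 - 2 ^ (k + 1) * (1 - r) ≤ dyadicRadius r (k + 1) := le_max_right _ _
  refine max_le (by linarith [(dyadicRadius_mem_Ico hr (k + 1)).1]) ?_
  rw [pow_succ] at hsucc
  linarith

lemma exists_dyadicRadius_eq_zero (hr : r < 1) : ∃ k, dyadicRadius r k = 0 := by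
  have hr' : 0 < 1 - r := sub_pos.2 hr
  obtain ⟨k, hk⟩ := pow_unbounded_of_one_lt (1 / (1 - r)) one_lt_two
  refine ⟨k, max_eq_left ?_⟩
  rw [div_lt_iff₀ hr'] at hk
  linarith

lemma dyadicRadius_pow_le_exp {m : ℕ} (hm : 1 ≤ m * (1 - r)) (k : ℕ) :
    dyadicRadius r k ^ m ≤ exp (-2 ^ k) := by
  have hle : dyadicRadius r k ≤ exp (-(2 ^ k * (1 - r))) :=
    max_le (exp_pos _).le (one_sub_le_exp_neg _)
  calc dyadicRadius r k ^ m ≤ exp (-(2 ^ k * (1 - r))) ^ m :=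
        pow_le_pow_left₀ (le_max_left _ _) hle m
    _ = exp (-(2 ^ k * (m * (1 - r)))) := by rw [← exp_nat_mul]; ring_nf
    _ ≤ exp (-2 ^ k) := by
        gcongr
        exact le_mul_of_one_le_right (by positivity) hm

end DyadicRadius

/-- Radial weights whose tail satisfies the doubling condition `ω̂(r) ≤ C ω̂((1 + r) / 2)`. -/
structure IsDoublingWeight (ω : ℝ → ℝ) (C : ℝ) : Prop extends IsRadialWeight ω where
  weightTail_le : ∀ r ∈ Set.Ico (0 : ℝ) 1, weightTail ω r ≤ C * weightTail ω ((1 + r) / 2)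

namespace IsDoublingWeight

variable {ω : ℝ → ℝ} {C r : ℝ}

lemma const_pos (hω : IsDoublingWeight ω C) (h0 : 0 < weightTail ω 0) : 0 < C :=
  pos_of_mul_pos_left (h0.trans_le (hω.weightTail_le 0 ⟨le_rfl, one_pos⟩))
    (hω.weightTail_nonneg ⟨by norm_num, by norm_num⟩)

lemma weightTail_dyadicRadius_le (hω : IsDoublingWeight ω C) (hC : 0 ≤ C)
    (hr : r ∈ Set.Ico (0 : ℝ) 1) (k : ℕ) :
    weightTail ω (dyadicRadius r k) ≤ C ^ k * weightTail ω r := by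
  induction k with
  | zero => rw [dyadicRadius_zero hr.1, pow_zero, one_mul]
  | succ k ih =>
    have hmem := fun k => dyadicRadius_mem_Ico hr.2 k
    have hmid := dyadicRadius_le_midpoint hr.2 k
    calc weightTail ω (dyadicRadius r (k + 1))
        ≤ C * weightTail ω ((1 + dyadicRadius r (k + 1)) / 2) := hω.weightTail_le _ (hmem _)
      _ ≤ C * weightTail ω (dyadicRadius r k) := by
          gcongr
          exact hω.antitoneOn_weightTail (Set.Ico_subset_Icc_self (hmem k))
            ⟨(hmem k).1.trans hmid, by linarith [(hmem (k + 1)).2]⟩ hmid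
      _ ≤ C * (C ^ k * weightTail ω r) := by gcongr
      _ = C ^ (k + 1) * weightTail ω r := by ring

lemma weightTail_pos (hω : IsDoublingWeight ω C) (h0 : 0 < weightTail ω 0)
    (hr : r ∈ Set.Ico (0 : ℝ) 1) : 0 < weightTail ω r := by
  have hC := hω.const_pos h0
  obtain ⟨k, hk⟩ := exists_dyadicRadius_eq_zero hr.2
  have hle := hω.weightTail_dyadicRadius_le hC.le hr k
  rw [hk] at hle
  exact pos_of_mul_pos_right (h0.trans_le hle) (by positivity)

lemma monotoneOn_rpow_weightTail (hω : IsDoublingWeight ω C) (h0 : 0 < weightTail ω 0) {z : ℝ}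
    (hz : z ≤ 0) : MonotoneOn (fun t => weightTail ω t ^ z) (Set.Ico 0 1) :=
  fun _ ha _ hb hab => rpow_le_rpow_of_nonpos (hω.weightTail_pos h0 hb)
    (hω.antitoneOn_weightTail (Set.Ico_subset_Icc_self ha) (Set.Ico_subset_Icc_self hb) hab) hz

lemma weightTail_le_mul_weightMoment (hω : IsDoublingWeight ω C) (hC : 0 ≤ C)
    (hr : r ∈ Set.Ico (0 : ℝ) 1) (m : ℕ) :
    weightTail ω r ≤ C * exp (m * (1 - r)) * weightMoment ω m := by
  obtain ⟨hr0, hr1⟩ := hr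
  have hexp : exp (-(1 - r)) ≤ (1 + r) / 2 := by
    linarith [exp_neg_le_one_sub_half (sub_nonneg.2 hr1.le) (by linarith)]
  have hmem : (1 + r) / 2 ∈ Set.Icc (0 : ℝ) 1 := ⟨by linarith, by linarith⟩
  have hpow : 1 ≤ exp (m * (1 - r)) * ((1 + r) / 2) ^ m :=
    calc 1 = exp (m * (1 - r)) * exp (-(1 - r)) ^ m := by
          rw [← exp_nat_mul, ← exp_add, mul_neg, add_neg_cancel, exp_zero]
      _ ≤ exp (m * (1 - r)) * ((1 + r) / 2) ^ m := by gcongr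
  calc weightTail ω r ≤ C * weightTail ω ((1 + r) / 2) := hω.weightTail_le r ⟨hr0, hr1⟩
    _ ≤ C * (exp (m * (1 - r)) * ((1 + r) / 2) ^ m * weightTail ω ((1 + r) / 2)) := by
        gcongr
        exact le_mul_of_one_le_left (hω.weightTail_nonneg hmem) hpow
    _ = C * exp (m * (1 - r)) * (((1 + r) / 2) ^ m * weightTail ω ((1 + r) / 2)) := by ring
    _ ≤ C * exp (m * (1 - r)) * weightMoment ω m := by
        gcongr
        exact hω.pow_mul_weightTail_le_weightMoment hmem m

lemma weightMoment_le_mul_weightTail (hω : IsDoublingWeight ω C) (hC : 0 ≤ C)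
    (hr : r ∈ Set.Ico (0 : ℝ) 1) {m : ℕ} (hm : 1 ≤ m * (1 - r)) :
    weightMoment ω m ≤ (1 + ∑' k : ℕ, C ^ (k + 1) * exp (-2 ^ k)) * weightTail ω r := by
  have hmem : ∀ k, dyadicRadius r k ∈ Set.Icc (0 : ℝ) 1 := fun k =>
    Set.Ico_subset_Icc_self (dyadicRadius_mem_Ico hr.2 k)
  have htail : 0 ≤ weightTail ω r := hω.weightTail_nonneg (Set.Ico_subset_Icc_self hr)
  have hterm : ∀ k, dyadicRadius r k ^ m * weightTail ω (dyadicRadius r (k + 1)) ≤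
      C ^ (k + 1) * exp (-2 ^ k) * weightTail ω r := fun k =>
    calc _ ≤ exp (-2 ^ k) * (C ^ (k + 1) * weightTail ω r) :=
          mul_le_mul (dyadicRadius_pow_le_exp hm k) (hω.weightTail_dyadicRadius_le hC hr (k + 1))
            (hω.weightTail_nonneg (hmem _)) (exp_pos _).le
      _ = _ := by ring
  obtain ⟨K, hK⟩ := exists_dyadicRadius_eq_zero hr.2
  calc weightMoment ω m = ∫ s in dyadicRadius r K..1, s ^ m * ω s := by rw [hK, weightMoment]
    _ ≤ weightTail ω (dyadicRadius r 0) + ∑ k ∈ Finset.range K,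
          dyadicRadius r k ^ m * weightTail ω (dyadicRadius r (k + 1)) :=
        hω.integral_pow_mul_le_weightTail_add_sum (antitone_dyadicRadius hr.2.le) hmem m K
    _ ≤ weightTail ω r + ∑ k ∈ Finset.range K, C ^ (k + 1) * exp (-2 ^ k) * weightTail ω r := by
        rw [dyadicRadius_zero hr.1]
        exact add_le_add_right (Finset.sum_le_sum fun k _ => hterm k) _
    _ = (1 + ∑ k ∈ Finset.range K, C ^ (k + 1) * exp (-2 ^ k)) * weightTail ω r := by
        rw [← Finset.sum_mul, add_mul, one_mul]
    _ ≤ _ := by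
        gcongr
        exact (summable_pow_mul_exp_neg_two_pow C).sum_le_tsum _ fun k _ => by positivity

lemma exists_weightMoment_floor_comparison (hω : IsDoublingWeight ω C) (hC : 0 < C) :
    ∃ A B : ℝ, 0 < A ∧ 0 < B ∧ ∀ r ∈ Set.Ico (0 : ℝ) 1,
      weightTail ω r ≤ A * weightMoment ω (2 * ⌊1 / (1 - r)⌋₊ + 1) ∧
      weightMoment ω (2 * ⌊1 / (1 - r)⌋₊ + 1) ≤ B * weightTail ω r := by
  have htsum : 0 ≤ ∑' k : ℕ, C ^ (k + 1) * exp (-2 ^ k) := tsum_nonneg fun k => by positivity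
  refine ⟨C * exp 3, 1 + ∑' k : ℕ, C ^ (k + 1) * exp (-2 ^ k), by positivity,
    add_pos_of_pos_of_nonneg one_pos htsum, fun r hr => ?_⟩
  have hx : 0 < 1 - r := sub_pos.2 hr.2
  have hx1 : 1 - r ≤ 1 := sub_le_self _ hr.1
  have hle := natFloor_one_div_mul_le_one hx
  have hge := one_le_two_mul_natFloor_one_div_mul hx hx1
  set m := 2 * ⌊1 / (1 - r)⌋₊ + 1 with hm
  have hm_eq : (m : ℝ) * (1 - r) = 2 * (⌊1 / (1 - r)⌋₊ * (1 - r)) + (1 - r) := by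
    rw [hm]
    push_cast
    ring
  have hmoment : 0 ≤ weightMoment ω m := hω.integral_pow_mul_nonneg le_rfl zero_le_one le_rfl m
  refine ⟨(hω.weightTail_le_mul_weightMoment hC.le hr m).trans ?_,
    hω.weightMoment_le_mul_weightTail hC.le hr (by linarith)⟩
  gcongr
  linarith

lemma exists_div_rpow_weightMoment_comparison (hω : IsDoublingWeight ω C)
    (h0 : 0 < weightTail ω 0) {q : ℝ} (hq : 0 ≤ q) :
    ∃ A B : ℝ, 0 ≤ A ∧ 0 ≤ B ∧ ∀ r ∈ Set.Ico (0 : ℝ) 1, ∀ s ∈ Set.Ico (0 : ℝ) 1,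
      weightTail ω r / (weightMoment ω (2 * ⌊1 / (1 - r)⌋₊ + 1) ^ q * ⌊1 / (1 - s)⌋₊) ≤
        A * (weightTail ω r ^ (1 - q) * (1 - s)) ∧
      weightTail ω r ^ (1 - q) * (1 - s) ≤
        B * (weightTail ω r / (weightMoment ω (2 * ⌊1 / (1 - r)⌋₊ + 1) ^ q * ⌊1 / (1 - s)⌋₊)) := by
  obtain ⟨A, B, hA, hB, hAB⟩ := hω.exists_weightMoment_floor_comparison (hω.const_pos h0)
  refine ⟨A ^ q * 2, B ^ q, by positivity, by positivity, fun r hr s hs => ?_⟩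
  obtain ⟨htail_le, hmoment_le⟩ := hAB r hr
  have htail := hω.weightTail_pos h0 hr
  have hmoment := pos_of_mul_pos_right (htail.trans_le htail_le) hA.le
  have hs' : 0 < 1 - s := sub_pos.2 hs.2
  have hfloor := one_le_two_mul_natFloor_one_div_mul hs' (sub_le_self _ hs.1)
  have hfloor_pos : (0 : ℝ) < ⌊1 / (1 - s)⌋₊ := pos_of_mul_pos_left (by linarith) hs'.le
  exact ⟨div_rpow_mul_le_of_le_mul htail hmoment hq hA.le hfloor_pos htail_le hfloor,
    rpow_one_sub_mul_le_of_le_mul htail hmoment hq hB.le hfloor_pos hmoment_le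
      (natFloor_one_div_mul_le_one hs')⟩

end IsDoublingWeight

theorem stmt16_general {ω : ℝ → ℝ} {C q : ℝ} (hω : IsDoublingWeight ω C) (hq : 1 < q)
    {r : ℕ → ℝ} (hr : ∀ n, r n ∈ Set.Ico (0 : ℝ) 1)
    (htail : ∀ n : ℕ, weightTail ω (r n) = 2 ^ (-(n : ℝ)))
    {M : ℕ → ℕ} (hM : ∀ n, M n = ⌊1 / (1 - r n)⌋₊) :
    ∑' j : ℕ, ENNReal.ofReal
        ((2 : ℝ) ^ (-(j : ℝ)) / (weightMoment ω (2 * M j + 1) ^ q * (M (j + 1) : ℝ))) = ⊤ ↔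
      ∫⁻ t in Set.Ioo (0 : ℝ) 1, ENNReal.ofReal (weightTail ω t ^ (1 - q)) = ⊤ := by
  have hmass : 0 < weightTail ω 0 := (htail 0 ▸ by positivity : 0 < weightTail ω (r 0)).trans_le
    (hω.antitoneOn_weightTail ⟨le_rfl, zero_le_one⟩ (Set.Ico_subset_Icc_self (hr 0)) (hr 0).1)
  have hmono := hω.monotoneOn_rpow_weightTail hmass (sub_neg.2 hq).le
  have hlevel : ∀ n, weightTail ω (r n) ^ (1 - q) = ((2 : ℝ) ^ (q - 1)) ^ n := fun n => by
    rw [htail, two_rpow_neg_rpow_one_sub]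
  obtain ⟨A, B, hA, hB, hAB⟩ :=
    hω.exists_div_rpow_weightMoment_comparison hmass (zero_le_one.trans hq.le)
  rw [← tsum_geometric_mul_sub_eq_top_iff (one_lt_rpow one_lt_two (sub_pos.2 hq)) hmono hr hlevel]
  simp only [hM, ← htail, ← hlevel]
  exact ⟨tsum_ofReal_eq_top_of_le_mul hA fun j => (hAB _ (hr j) _ (hr (j + 1))).1,
    tsum_ofReal_eq_top_of_le_mul hB fun j => (hAB _ (hr j) _ (hr (j + 1))).2⟩

theorem stmt16 (p : ℝ) (hp : 1 < p) (ω : ℝ → ℝ)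
    (hω0 : ∀ r ∈ Set.Ico (0:ℝ) 1, 0 ≤ ω r)
    (hint : IntervalIntegrable ω MeasureTheory.volume 0 1)
    (hnorm : (∫ s in (0:ℝ)..1, ω s) = 1)
    (Cd : ℝ) (hdoub : ∀ r ∈ Set.Ico (0:ℝ) 1,
      (∫ s in r..1, ω s) ≤ Cd * ∫ s in ((1 + r) / 2)..1, ω s)
    (rn : ℕ → ℝ) (hrn : ∀ n, rn n ∈ Set.Ico (0:ℝ) 1)
    (hrdef : ∀ n : ℕ, (∫ s in (rn n)..1, ω s) = 2 ^ (-(n:ℝ)))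
    (M : ℕ → ℕ) (hM : ∀ n, M n = Nat.floor (1 / (1 - rn n))) :
    (∑' j : ℕ, ENNReal.ofReal
        ((2:ℝ) ^ (-(j:ℝ)) /
          ((∫ s in (0:ℝ)..1, s ^ (2 * M j + 1) * ω s) ^ (p / (p - 1)) * (M (j + 1) : ℝ)))
      = ⊤) ↔
    (∫⁻ t in Set.Ioo (0:ℝ) 1,
        ENNReal.ofReal ((∫ s in t..1, ω s) ^ ((1:ℝ) - p / (p - 1))) = ⊤) :=
  stmt16_general ⟨⟨hω0, hint⟩, hdoub⟩ ((one_lt_div (sub_pos.2 hp)).2 (sub_one_lt p)) hrn hrdef hM
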